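/- Let n, d, m ≥ 1 be integers and consider the knapsack instance I_n (items (i,b) for i ∈ {1,…,n}, b ∈ {0,1}, with weight 2^i and value 4^i, capacity 2^{n+1} − 2). Then there exist m pairwise distinct optimal packings T_1, …, T_m of I_n with |T_a Δ T_b| ≥ 2d for all a ≠ b if and only if A_2(n, d) ≥ m. -/

import Mathlib

open Finset

/-- The weight of a set of items of the knapsack instance `I n`: item `(i, b)` has weight
`2^(i+1)` (indices `i : Fin n` represent items `1,…,n`). -/
def knapWeight (n : ℕ) (T : Finset (Fin n × Bool)) : ℕ :=
  ∑ x ∈ T, 2 ^ (x.1.1 + 1)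

/-- The value of a set of items of the knapsack instance `I n`: item `(i, b)` has value
`4^(i+1)`. -/
def knapValue (n : ℕ) (T : Finset (Fin n × Bool)) : ℕ :=
  ∑ x ∈ T, 4 ^ (x.1.1 + 1)

/-- An optimal packing of the instance `I n`: a set of items of weight at most the
capacity `2^(n+1) - 2` and of maximum value among all such sets. -/
def IsOptimalPacking (n : ℕ) (T : Finset (Fin n × Bool)) : Prop :=
  knapWeight n T ≤ 2 ^ (n + 1) - 2 ∧
  ∀ T' : Finset (Fin n × Bool), knapWeight n T' ≤ 2 ^ (n + 1) - 2 →
    knapValue n T' ≤ knapValue n T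

/-- `A₂ n d`: the maximum number of binary codewords of length `n` in which every two
distinct codewords have Hamming distance at least `d`. -/
noncomputable def A2 (n d : ℕ) : ℕ :=
  sSup {m | ∃ C : Finset (Fin n → Bool), C.card = m ∧
    ∀ x ∈ C, ∀ y ∈ C, x ≠ y → d ≤ hammingDist x y}

/-! An optimal packing takes exactly one of the two items of each index. Going down from the largest
index, two items there exceed the capacity on their own, while without any the remaining items,
whose value per unit weight is at most half as large, cannot make up for the loss even if each were
available in unlimited supply. Hence the optimal packings are the graphs of the binary words of
length `n`, and two such graphs differ in two items for each position where the words differ. -/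

section Superincreasing

variable {w r : ℕ → ℕ}

theorem sum_fin_succ_lt_two_mul {n : ℕ} (w_super : ∑ i : Fin n, w i < w n) :
    ∑ i : Fin (n + 1), w i < 2 * w n := by
  simpa [Fin.sum_univ_castSucc, two_mul] using w_super

theorem sum_mul_lt_of_two_mul_density_le {n : ℕ} {c : Fin n → ℕ}
    (w_super : ∑ i : Fin n, w i < w n) (r_pos : 0 < r n) (r_double : ∀ i < n, 2 * r i ≤ r n)
    (weight_le : ∑ i, c i * w i ≤ ∑ i : Fin (n + 1), w i) :
    ∑ i, c i * (r i * w i) < r n * w n := by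
  refine lt_of_mul_lt_mul_left (a := 2) ?_ (Nat.zero_le 2)
  calc 2 * ∑ i, c i * (r i * w i) = ∑ i : Fin n, 2 * r i * (c i * w i) := by
        rw [mul_sum]
        exact sum_congr rfl fun i _ => by ring
    _ ≤ ∑ i, r n * (c i * w i) :=
        sum_le_sum fun i _ => Nat.mul_le_mul_right _ (r_double i i.isLt)
    _ = r n * ∑ i, c i * w i := (mul_sum _ _ _).symm
    _ < r n * (2 * w n) :=
        Nat.mul_lt_mul_of_pos_left (weight_le.trans_lt (sum_fin_succ_lt_two_mul w_super)) r_pos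
    _ = 2 * (r n * w n) := by ring

theorem sum_mul_lt_sum_of_superincreasing (w_super : ∀ k, ∑ i : Fin k, w i < w k)
    (r_pos : ∀ k, 0 < r k) (r_double : ∀ k, ∀ i < k, 2 * r i ≤ r k) {n : ℕ} {c : Fin n → ℕ}
    (weight_le : ∑ i, c i * w i ≤ ∑ i : Fin n, w i) (c_ne_one : c ≠ 1) :
    ∑ i, c i * (r i * w i) < ∑ i : Fin n, r i * w i := by
  induction n with
  | zero => exact absurd (Subsingleton.elim c 1) c_ne_one
  | succ n ih =>
    match c_last : c (Fin.last n) with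
    | 0 =>
      have init_weight_le : ∑ i : Fin n, c i.castSucc * w i ≤ ∑ i : Fin (n + 1), w i := by
        simpa [Fin.sum_univ_castSucc (fun i => c i * w i), c_last] using weight_le
      have init_value_lt :=
        sum_mul_lt_of_two_mul_density_le (w_super n) (r_pos n) (r_double n) init_weight_le
      simpa [Fin.sum_univ_castSucc, c_last] using init_value_lt.trans_le (Nat.le_add_left _ _)
    | 1 =>
      have init_ne_one : (fun i : Fin n => c i.castSucc) ≠ 1 := fun init_eq_one =>
        c_ne_one <| funext <| Fin.lastCases c_last (congrFun init_eq_one)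
      have init_weight_le : ∑ i : Fin n, c i.castSucc * w i ≤ ∑ i : Fin n, w i := by
        simpa [Fin.sum_univ_castSucc, c_last] using weight_le
      simpa [Fin.sum_univ_castSucc, c_last] using ih init_weight_le init_ne_one
    | k + 2 =>
      have two_mul_le_weight : 2 * w n ≤ ∑ i, c i * w i :=
        calc 2 * w n ≤ c (Fin.last n) * w n := Nat.mul_le_mul_right _ (c_last ▸ Nat.le_add_left 2 k)
          _ ≤ ∑ i, c i * w i :=
              single_le_sum (f := fun i => c i * w i) (fun _ _ => Nat.zero_le _) (mem_univ _)
      exact absurd (two_mul_le_weight.trans weight_le) (sum_fin_succ_lt_two_mul (w_super n)).not_ge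

end Superincreasing

section FunctionGraph

variable {ι α : Type*} [Fintype ι]

/-- The graph of `x : ι → α` as a finite set of pairs; the graph of a binary word `x` is the packing
that contains, for each index `i`, the single item `(i, x i)`. -/
def functionGraph (x : ι → α) : Finset (ι × α) :=
  univ.map ⟨fun i => (i, x i), fun _ _ h => congrArg Prod.fst h⟩

theorem mem_functionGraph {x : ι → α} {p : ι × α} : p ∈ functionGraph x ↔ x p.1 = p.2 :=
  mem_map.trans ⟨by rintro ⟨i, -, rfl⟩; rfl, fun h => ⟨p.1, mem_univ _, Prod.ext rfl h⟩⟩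

theorem functionGraph_injective :
    Function.Injective (functionGraph : (ι → α) → Finset (ι × α)) := fun x y h => funext fun i => by
  have mem_right : (i, x i) ∈ functionGraph y := h ▸ mem_functionGraph.2 rfl
  exact (mem_functionGraph.1 mem_right).symm

theorem card_functionGraph_sdiff [DecidableEq ι] [DecidableEq α] (x y : ι → α) :
    #(functionGraph x \ functionGraph y) = hammingDist x y := by
  refine card_nbij' Prod.fst (fun i => (i, x i)) ?_ ?_ ?_ ?_
  all_goals
    simp only [Set.MapsTo, Set.LeftInvOn, coe_sdiff, coe_filter]
    grind [mem_functionGraph]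

theorem card_symmDiff_functionGraph [DecidableEq ι] [DecidableEq α] (x y : ι → α) :
    #(symmDiff (functionGraph x) (functionGraph y)) = 2 * hammingDist x y := by
  rw [symmDiff_def, sup_eq_union, card_union_of_disjoint disjoint_sdiff_sdiff,
    card_functionGraph_sdiff, card_functionGraph_sdiff, hammingDist_comm y x, two_mul]

/-- The number of pairs in `T` with first coordinate `i`; for a packing, how many of the items of
index `i` it contains. -/
def fstFiberCard [DecidableEq ι] (T : Finset (ι × α)) (i : ι) : ℕ := #{p ∈ T | p.1 = i}

theorem fstFiberCard_eq_one_iff_exists_functionGraph_eq [DecidableEq ι] {T : Finset (ι × α)} :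
    fstFiberCard T = 1 ↔ ∃ x, functionGraph x = T := by
  constructor
  · intro card_eq_one
    choose p fiber_eq using fun i => Finset.card_eq_one.1 (congrFun card_eq_one i)
    have mem_fiber (q : ι × α) (i : ι) : q ∈ T ∧ q.1 = i ↔ q = p i := by
      rw [← mem_singleton (a := p i), ← fiber_eq, mem_filter]
    have p_mem (i : ι) : p i ∈ T ∧ (p i).1 = i := (mem_fiber _ i).2 rfl
    refine ⟨fun i => (p i).2, ?_⟩
    ext ⟨i, a⟩
    rw [mem_functionGraph]
    grind
  · rintro ⟨x, rfl⟩
    funext i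
    refine Finset.card_eq_one.2 ⟨(i, x i), ?_⟩
    ext ⟨j, a⟩
    grind [mem_functionGraph]

theorem sum_fst_eq_sum_fstFiberCard_nsmul [DecidableEq ι] {M : Type*} [AddCommMonoid M]
    (T : Finset (ι × α)) (f : ι → M) : ∑ p ∈ T, f p.1 = ∑ i, fstFiberCard T i • f i := by
  rw [← sum_fiberwise' T Prod.fst f]
  simp only [fstFiberCard, sum_const]

end FunctionGraph

section Knapsack

variable {n : ℕ} {T : Finset (Fin n × Bool)}

theorem sum_two_pow_succ_add_two (n : ℕ) : ∑ i : Fin n, 2 ^ (i.1 + 1) + 2 = 2 ^ (n + 1) := by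
  induction n with
  | zero => rfl
  | succ n ih =>
    simp only [Fin.sum_univ_castSucc, Fin.val_castSucc, Fin.val_last]
    lia

theorem knapWeight_le_capacity_iff : knapWeight n T ≤ 2 ^ (n + 1) - 2 ↔
    ∑ i, fstFiberCard T i * 2 ^ (i.1 + 1) ≤ ∑ i : Fin n, 2 ^ (i.1 + 1) := by
  rw [← sum_two_pow_succ_add_two, Nat.add_sub_cancel, knapWeight,
    sum_fst_eq_sum_fstFiberCard_nsmul T fun i => 2 ^ (i.1 + 1)]
  rfl

theorem knapValue_eq_sum_fstFiberCard_mul :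
    knapValue n T = ∑ i, fstFiberCard T i * 4 ^ (i.1 + 1) :=
  sum_fst_eq_sum_fstFiberCard_nsmul T fun i => 4 ^ (i.1 + 1)

theorem knapValue_lt_of_fstFiberCard_ne_one (weight_le : knapWeight n T ≤ 2 ^ (n + 1) - 2)
    (ne_one : fstFiberCard T ≠ 1) : knapValue n T < ∑ i : Fin n, 4 ^ (i.1 + 1) := by
  have four_pow (k : ℕ) : 4 ^ (k + 1) = 2 ^ (k + 1) * 2 ^ (k + 1) := by rw [← mul_pow]; rfl
  simp only [knapValue_eq_sum_fstFiberCard_mul, four_pow]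
  refine sum_mul_lt_sum_of_superincreasing (w := fun k => 2 ^ (k + 1)) (r := fun k => 2 ^ (k + 1))
    (fun k => ?_) (fun k => by positivity) (fun k i hik => ?_)
    (knapWeight_le_capacity_iff.1 weight_le) ne_one
  · have := sum_two_pow_succ_add_two k
    lia
  · rw [← pow_succ']
    exact Nat.pow_le_pow_right two_pos (by lia)

theorem knapWeight_le_of_fstFiberCard_eq_one (eq_one : fstFiberCard T = 1) :
    knapWeight n T ≤ 2 ^ (n + 1) - 2 := by
  simp [knapWeight_le_capacity_iff, eq_one]

theorem knapValue_of_fstFiberCard_eq_one (eq_one : fstFiberCard T = 1) :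
    knapValue n T = ∑ i : Fin n, 4 ^ (i.1 + 1) := by
  simp [knapValue_eq_sum_fstFiberCard_mul, eq_one]

theorem isOptimalPacking_iff_fstFiberCard_eq_one :
    IsOptimalPacking n T ↔ fstFiberCard T = 1 := by
  constructor
  · intro optimal
    by_contra ne_one
    have graph_eq_one : fstFiberCard (functionGraph fun _ : Fin n => true) = 1 :=
      fstFiberCard_eq_one_iff_exists_functionGraph_eq.2 ⟨_, rfl⟩
    have value_le := optimal.2 _ (knapWeight_le_of_fstFiberCard_eq_one graph_eq_one)
    rw [knapValue_of_fstFiberCard_eq_one graph_eq_one] at value_le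
    exact value_le.not_gt (knapValue_lt_of_fstFiberCard_ne_one optimal.1 ne_one)
  · intro eq_one
    refine ⟨knapWeight_le_of_fstFiberCard_eq_one eq_one, fun T' weight_le => ?_⟩
    rw [knapValue_of_fstFiberCard_eq_one eq_one]
    by_cases eq_one' : fstFiberCard T' = 1
    · exact (knapValue_of_fstFiberCard_eq_one eq_one').le
    · exact (knapValue_lt_of_fstFiberCard_ne_one weight_le eq_one').le

theorem isOptimalPacking_iff_exists_functionGraph_eq :
    IsOptimalPacking n T ↔ ∃ x, functionGraph x = T :=
  isOptimalPacking_iff_fstFiberCard_eq_one.trans fstFiberCard_eq_one_iff_exists_functionGraph_eq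

end Knapsack

theorem le_A2_iff_exists_card {n d m : ℕ} : m ≤ A2 n d ↔ ∃ C : Finset (Fin n → Bool), m ≤ #C ∧
    ∀ x ∈ C, ∀ y ∈ C, x ≠ y → d ≤ hammingDist x y := by
  have bddAbove : BddAbove {m | ∃ C : Finset (Fin n → Bool), #C = m ∧
      ∀ x ∈ C, ∀ y ∈ C, x ≠ y → d ≤ hammingDist x y} :=
    ⟨Fintype.card (Fin n → Bool), by rintro _ ⟨C, rfl, -⟩; exact C.card_le_univ⟩
  constructor
  · intro le_A2
    obtain ⟨C, card_eq, code⟩ : A2 n d ∈ _ := Nat.sSup_mem ⟨0, ∅, by simp⟩ bddAbove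
    exact ⟨C, le_A2.trans card_eq.ge, code⟩
  · rintro ⟨C, le_card, code⟩
    exact le_card.trans (le_csSup bddAbove ⟨C, rfl, code⟩)

theorem le_A2_iff_exists_injective {n d m : ℕ} :
    m ≤ A2 n d ↔ ∃ x : Fin m → Fin n → Bool, Function.Injective x ∧
      ∀ a b, a ≠ b → d ≤ hammingDist (x a) (x b) := by
  rw [le_A2_iff_exists_card]
  constructor
  · rintro ⟨C, le_card, code⟩
    obtain ⟨e⟩ : Nonempty (Fin m ↪ C) := Function.Embedding.nonempty_of_card_le (by simpa)
    have injective : Function.Injective fun a => (e a).1 := Subtype.val_injective.comp e.injective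
    exact ⟨_, injective, fun a b hab => code _ (e a).2 _ (e b).2 (injective.ne hab)⟩
  · rintro ⟨x, injective, dist_le⟩
    refine ⟨univ.image x, by simp [card_image_of_injective _ injective], ?_⟩
    simp only [mem_image, mem_univ, true_and]
    rintro _ ⟨a, rfl⟩ _ ⟨b, rfl⟩ hab
    exact dist_le a b (ne_of_apply_ne x hab)

/-- There exist `m` pairwise distinct optimal packings of `I n` with pairwise symmetric
difference at least `2d` if and only if `A₂(n, d) ≥ m`. -/
theorem diverse_optimal_packings_iff_code (n d m : ℕ)
    (hn : 1 ≤ n) (hd : 1 ≤ d) (hm : 1 ≤ m) :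
    (∃ T : Fin m → Finset (Fin n × Bool),
      Function.Injective T ∧
      (∀ a : Fin m, IsOptimalPacking n (T a)) ∧
      (∀ a b : Fin m, a ≠ b → 2 * d ≤ (symmDiff (T a) (T b)).card)) ↔
    m ≤ A2 n d := by
  have two_mul_le_iff (x y : Fin n → Bool) :
      2 * d ≤ #(symmDiff (functionGraph x) (functionGraph y)) ↔ d ≤ hammingDist x y := by
    rw [card_symmDiff_functionGraph, Nat.mul_le_mul_left_iff two_pos]
  rw [le_A2_iff_exists_injective]
  constructor
  · rintro ⟨T, injective, optimal, diverse⟩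
    choose x graph_eq using fun a => isOptimalPacking_iff_exists_functionGraph_eq.1 (optimal a)
    obtain rfl : functionGraph ∘ x = T := funext graph_eq
    exact ⟨x, injective.of_comp, fun a b hab => (two_mul_le_iff _ _).1 (diverse a b hab)⟩
  · rintro ⟨x, injective, dist_le⟩
    exact ⟨functionGraph ∘ x, functionGraph_injective.comp injective,
      fun a => isOptimalPacking_iff_exists_functionGraph_eq.2 ⟨x a, rfl⟩,
      fun a b hab => (two_mul_le_iff _ _).2 (dist_le a b hab)⟩
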